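/- arXiv:1904.07674 — 2 statements merged into one kernel-verified Lean document; each statement's English description precedes it below -/
import Mathlib

section
/- For all integers n, k, j with 1 ≤ k ≤ n and 0 ≤ j ≤ n−k, the number of unordered partitions π of [n] = {1,…,n} into k nonempty lists such that nse(π) = j equals c(n, n−j) · S(n−j, k), where c denotes the unsigned Stirling number of the first kind and S denotes the Stirling number of the second kind. -/
open Finset

/-- The number of cycles (including fixed points) of a permutation of `Fin n`. -/
noncomputable def cycleCount {n : ℕ} (σ : Equiv.Perm (Fin n)) : ℕ :=
  σ.cycleType.card + (Finset.univ.filter fun x => σ x = x).card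

/-- The unsigned Stirling number of the first kind `c(n,k)`: the number of
permutations of an `n`-element set with exactly `k` cycles. -/
noncomputable def stirlingFirst (n k : ℕ) : ℕ :=
  Set.ncard {σ : Equiv.Perm (Fin n) | cycleCount σ = k}

/-- The signed Stirling number of the first kind `s(n,k) = (-1)^(n-k) c(n,k)`. -/
noncomputable def stirlingFirstSigned (n k : ℕ) : ℤ :=
  (-1) ^ (n - k) * (stirlingFirst n k : ℤ)

/-- `P` is an (unordered) partition of `Fin n` into nonempty blocks. -/
def IsPartitionOf (n : ℕ) (P : Finset (Finset (Fin n))) : Prop :=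
  (∀ b ∈ P, b.Nonempty) ∧ (∀ b ∈ P, ∀ c ∈ P, b ≠ c → Disjoint b c) ∧
    ∀ x : Fin n, ∃ b ∈ P, x ∈ b

/-- The Stirling number of the second kind `S(n,k)`: the number of partitions of an
`n`-element set into exactly `k` nonempty blocks. -/
noncomputable def stirlingSecond (n k : ℕ) : ℕ :=
  Set.ncard {P : Finset (Finset (Fin n)) | IsPartitionOf n P ∧ P.card = k}

/-- The Bell number `B n`: the number of partitions of an `n`-element set into
nonempty blocks. -/
noncomputable def bell (n : ℕ) : ℕ :=
  Set.ncard {P : Finset (Finset (Fin n)) | IsPartitionOf n P}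

/-- The statistic `nse` of a list: the number of positions `j` such that some later
entry is smaller than the entry at position `j`. -/
def nseList {α : Type*} [LinearOrder α] : List α → ℕ
  | [] => 0
  | a :: w => (if ∃ b ∈ w, b < a then 1 else 0) + nseList w

/-- `B` is an ordered set partition ("list of sets") of `Fin n` into `k` pairwise
disjoint nonempty blocks. -/
def IsOrderedSetPartition (n k : ℕ) (B : Fin k → Finset (Fin n)) : Prop :=
  (∀ j, (B j).Nonempty) ∧ (∀ j l, j ≠ l → Disjoint (B j) (B l)) ∧
    ∀ x : Fin n, ∃ j, x ∈ B j

/-- The statistic `nsb` of an ordered set partition: the number of indices `j`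
such that `min (B j) > min (B l)` for some `l > j`. -/
def nsbOSP {n k : ℕ} (B : Fin k → Finset (Fin n)) : ℕ :=
  (Finset.univ.filter fun j : Fin k => ∃ l, j < l ∧ (B l).min < (B j).min).card

/-- `P` is a "set of lists" partition of `Fin n`: an unordered collection of nonempty
sequences of distinct elements, with pairwise disjoint underlying sets covering `Fin n`. -/
def IsSetOfLists (n : ℕ) (P : Finset (List (Fin n))) : Prop :=
  (∀ w ∈ P, w ≠ []) ∧ (∀ w ∈ P, w.Nodup) ∧
    (∀ w ∈ P, ∀ u ∈ P, w ≠ u → ∀ x ∈ w, x ∉ u) ∧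
    ∀ x : Fin n, ∃ w ∈ P, x ∈ w

/-- The statistic `nse` of a set of lists: the sum of `nseList` over its blocks. -/
def nseSL {n : ℕ} (P : Finset (List (Fin n))) : ℕ := ∑ w ∈ P, nseList w

/-- `L` is a "list of lists" partition of `Fin n` into `k` blocks: a sequence of `k`
nonempty sequences of distinct elements, with pairwise disjoint underlying sets
covering `Fin n`. -/
def IsListOfLists (n k : ℕ) (L : Fin k → List (Fin n)) : Prop :=
  (∀ j, L j ≠ []) ∧ (∀ j, (L j).Nodup) ∧
    (∀ j l, j ≠ l → ∀ x ∈ L j, x ∉ L l) ∧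
    ∀ x : Fin n, ∃ j, x ∈ L j

/-- The statistic `nse` of a list of lists: the sum of `nseList` over its blocks. -/
def nseLL {n k : ℕ} (L : Fin k → List (Fin n)) : ℕ := ∑ j, nseList (L j)

/-- The statistic `nsb` of a list of lists: the number of indices `j` such that
`min (L j) > min (L l)` for some `l > j`. -/
def nsbLL {n k : ℕ} (L : Fin k → List (Fin n)) : ℕ :=
  (Finset.univ.filter fun j : Fin k => ∃ l, j < l ∧ (L l).minimum < (L j).minimum).card

/-!
Delete the maximum `m` from a set of lists on `insert m s`. Conversely, `m` can be put back as a
new singleton list or at the end of a list, which leaves `nse` unchanged, or in front of one of the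
`#s` entries, which raises `nse` by one. Hence the number `a s k l` of sets of `k` lists on `s` with
`nse = #s - l` satisfies

`a (insert m s) (k + 1) (l + 1) = a s k l + (k + 1) * a s (k + 1) l + #s * a s (k + 1) (l + 1)`,

which is also the recurrence of the product `c(#s, l) * S(l, k)` of Mathlib's recursively defined
Stirling numbers.

These numbers count permutations and set partitions for the following reasons. Composing a
permutation `σ` that moves `0` with the transposition `(0 σ(0))` splits `0` off its cycle, which
adds one cycle. A set partition is a set of increasing lists, that is, one with `nse = 0`, so the
formula `a s k l = c(#s, l) * S(l, k)` with `l = #s` already counts set partitions.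
-/

section Permutations

open Equiv Equiv.Perm

section AbsLength

variable {α : Type*} [Fintype α] [DecidableEq α]

/-- The absolute length of a permutation: the sum over its cycles of the cycle length minus one,
which is the number of elements minus the number of cycles. -/
def absLength (σ : Perm α) : ℕ := (σ.cycleType.map (· - 1)).sum

theorem absLength_add_card_cycleType (σ : Perm α) :
    absLength σ + σ.cycleType.card = #σ.support := by
  have hpos : ∀ c ∈ σ.cycleType, c - 1 + 1 = c := fun c hc ↦
    Nat.sub_add_cancel (one_lt_of_mem_cycleType hc).le
  calc absLength σ + σ.cycleType.card = (σ.cycleType.map fun c ↦ c - 1 + 1).sum := by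
        simp [absLength]
    _ = #σ.support := by rw [Multiset.map_congr rfl hpos, Multiset.map_id', sum_cycleType]

@[simp] theorem absLength_one : absLength (1 : Perm α) = 0 := by simp [absLength]

theorem absLength_mul_of_disjoint {σ τ : Perm α} (h : Disjoint σ τ) :
    absLength (σ * τ) = absLength σ + absLength τ := by
  simp [absLength, h.cycleType_mul]

theorem absLength_add_one_of_isCycle {c : Perm α} (hc : c.IsCycle) :
    absLength c + 1 = #c.support := by
  rw [← absLength_add_card_cycleType, card_cycleType_eq_one.2 hc]

theorem absLength_swap_mul_isCycle {c : Perm α} (hc : c.IsCycle) {x : α} (hx : c x ≠ x) :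
    absLength (swap x (c x) * c) + 1 = absLength c := by
  by_cases hcc : c (c x) = x
  · have hswap : c = swap x (c x) := hc.eq_swap_of_apply_apply_eq_self hx hcc
    have hone : swap x (c x) * c = 1 := by nth_rw 2 [hswap]; exact swap_mul_self _ _
    have hcard : #c.support = 2 := by rw [hswap]; exact card_support_swap hx.symm
    have := absLength_add_one_of_isCycle hc
    rw [hone, absLength_one]
    lia
  · have hsupp : #(swap x (c x) * c).support + 1 = #c.support := by
      rw [support_swap_mul_eq c x hcc, sdiff_singleton_eq_erase]
      exact card_erase_add_one (mem_support.2 hx)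
    have := absLength_add_one_of_isCycle (hc.swap_mul hx hcc)
    have := absLength_add_one_of_isCycle hc
    lia

theorem absLength_swap_mul {σ : Perm α} {x : α} (hx : σ x ≠ x) :
    absLength (swap x (σ x) * σ) + 1 = absLength σ := by
  obtain ⟨c, hc⟩ : ∃ c, c = σ.cycleOf x := ⟨_, rfl⟩
  have hcx : c x = σ x := hc ▸ cycleOf_apply_self σ x
  have hcycle : c.IsCycle := hc ▸ isCycle_cycleOf σ hx
  obtain ⟨τ, hτ⟩ : ∃ τ, τ = σ * c⁻¹ := ⟨_, rfl⟩
  have hdisj : Disjoint c τ := by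
    rw [hτ, hc]
    exact (disjoint_mul_inv_of_mem_cycleFactorsFinset
      (cycleOf_mem_cycleFactorsFinset_iff.2 (mem_support.2 hx))).symm
  have hσ : σ = c * τ := by rw [hdisj.commute.eq, hτ, inv_mul_cancel_right]
  have hdisj' : Disjoint (swap x (c x) * c) τ := by
    rw [disjoint_iff_disjoint_support] at hdisj ⊢
    exact hdisj.mono_left fun y hy ↦ (mem_support_swap_mul_imp_mem_support_ne hy).1
  have hsplit : swap x (σ x) * σ = swap x (c x) * c * τ := by rw [hcx, mul_assoc, ← hσ]
  rw [hsplit, absLength_mul_of_disjoint hdisj', hσ, absLength_mul_of_disjoint hdisj,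
    ← absLength_swap_mul_isCycle hcycle (hcx ▸ hx)]
  lia

end AbsLength

variable {n : ℕ}

theorem cycleCount_add_absLength (σ : Perm (Fin n)) : cycleCount σ + absLength σ = n := by
  have hfix : #{x | σ x = x} + #σ.support = n := by
    simpa [support] using card_filter_add_card_filter_not (s := univ) (fun x ↦ σ x = x)
  have := absLength_add_card_cycleType σ
  rw [cycleCount]
  lia

theorem cycleType_decomposeFin_symm_zero (σ : Perm (Fin n)) :
    (decomposeFin.symm (0, σ)).cycleType = σ.cycleType := by
  have h : decomposeFin.symm (0, σ) = σ.extendDomain (finSuccAboveEquiv 0) := by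
    ext x
    refine Fin.cases ?_ (fun i ↦ ?_) x
    · rw [extendDomain_apply_not_subtype] <;> simp
    · have := extendDomain_apply_image σ (finSuccAboveEquiv (0 : Fin (n + 1))) i
      simp_all [finSuccAboveEquiv_apply]
  rw [h, cycleType_extendDomain]

theorem swap_mul_decomposeFin_symm (p : Fin (n + 1)) (σ : Perm (Fin n)) :
    swap 0 p * decomposeFin.symm (p, σ) = decomposeFin.symm (0, σ) := by
  ext x
  refine Fin.cases ?_ (fun i ↦ ?_) x <;> simp

theorem cycleCount_decomposeFin_symm_zero (σ : Perm (Fin n)) :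
    cycleCount (decomposeFin.symm (0, σ)) = cycleCount σ + 1 := by
  have hlen : absLength (decomposeFin.symm (0, σ)) = absLength σ := by
    rw [absLength, absLength, cycleType_decomposeFin_symm_zero]
  have := cycleCount_add_absLength σ
  have := cycleCount_add_absLength (decomposeFin.symm (0, σ))
  lia

theorem cycleCount_decomposeFin_symm_succ (i : Fin n) (σ : Perm (Fin n)) :
    cycleCount (decomposeFin.symm (i.succ, σ)) = cycleCount σ := by
  have hlen := absLength_swap_mul (σ := decomposeFin.symm (i.succ, σ)) (x := 0) (by simp)
  rw [decomposeFin_symm_apply_zero, swap_mul_decomposeFin_symm] at hlen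
  have := cycleCount_add_absLength (decomposeFin.symm (0, σ))
  have := cycleCount_add_absLength (decomposeFin.symm (i.succ, σ))
  have := cycleCount_decomposeFin_symm_zero σ
  lia

theorem stirlingFirst_eq_sum (n k : ℕ) :
    stirlingFirst n k = ∑ σ : Perm (Fin n), if cycleCount σ = k then 1 else 0 := by
  simp [stirlingFirst, Set.ncard_eq_toFinset_card']

theorem stirlingFirst_eq_nat_stirlingFirst (n k : ℕ) :
    stirlingFirst n k = Nat.stirlingFirst n k := by
  induction n generalizing k with
  | zero => cases k <;> simp [stirlingFirst_eq_sum, cycleCount]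
  | succ n ih =>
    rw [stirlingFirst_eq_sum, ← Equiv.sum_comp decomposeFin.symm, Fintype.sum_prod_type,
      Fin.sum_univ_succ]
    simp only [cycleCount_decomposeFin_symm_zero, cycleCount_decomposeFin_symm_succ,
      ← stirlingFirst_eq_sum, ih]
    cases k with
    | zero => cases n <;> simp
    | succ k =>
      simp only [Nat.add_right_cancel_iff, ← stirlingFirst_eq_sum, ih]
      rw [Nat.stirlingFirst_succ_succ, sum_const, card_univ, Fintype.card_fin, smul_eq_mul,
        add_comm]

end Permutations

section Lists

variable {α : Type*}

theorem erase_insertIdx_of_notMem [DecidableEq α] {m : α} {w : List α} (hm : m ∉ w) {i : ℕ}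
    (hi : i ≤ w.length) : (w.insertIdx i m).erase m = w := by
  induction w generalizing i with
  | nil => simp_all
  | cons a w ih => cases i <;> grind

theorem insertIdx_inj_of_notMem {m : α} {w w' : List α} {i i' : ℕ} (hm : m ∉ w)
    (hm' : m ∉ w') (hi : i ≤ w.length) (hi' : i' ≤ w'.length)
    (h : w.insertIdx i m = w'.insertIdx i' m) : w = w' ∧ i = i' := by
  classical
  obtain rfl : w = w' := by
    rw [← erase_insertIdx_of_notMem hm hi, h, erase_insertIdx_of_notMem hm' hi']
  exact ⟨rfl, List.injOn_insertIdx_index_of_notMem w m hm hi hi' h⟩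

theorem exists_insertIdx_eq_of_mem {m : α} {w : List α} (hm : m ∈ w) :
    ∃ v : List α, ∃ i ≤ v.length, v.insertIdx i m = w := by
  obtain ⟨i, hi, rfl⟩ := List.getElem_of_mem hm
  refine ⟨w.eraseIdx i, i, ?_, List.insertIdx_eraseIdx_getElem hi⟩
  rw [List.length_eraseIdx_of_lt hi]
  lia

theorem coe_insertIdx {m : α} {w : List α} {i : ℕ} (hi : i ≤ w.length) :
    (w.insertIdx i m : Multiset α) = m ::ₘ w :=
  Multiset.coe_eq_coe.2 (List.perm_insertIdx m w hi)

variable [LinearOrder α]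

theorem nseList_insertIdx_of_forall_lt {m : α} {w : List α} (hm : ∀ x ∈ w, x < m) {i : ℕ}
    (hi : i ≤ w.length) :
    nseList (w.insertIdx i m) = nseList w + if i < w.length then 1 else 0 := by
  induction w generalizing i with
  | nil => simp_all [nseList]
  | cons a w ih =>
    obtain ⟨ham, hw⟩ := List.forall_mem_cons.1 hm
    cases i with
    | zero => simp [nseList, ham, add_comm]
    | succ i =>
      have hi : i ≤ w.length := by simpa using hi
      simp [nseList, ih hw hi, List.mem_insertIdx hi, ham.not_gt, add_assoc]

theorem nseList_lt_length {w : List α} (hw : w ≠ []) : nseList w < w.length := by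
  induction w with
  | nil => contradiction
  | cons a w ih =>
    rcases eq_or_ne w [] with rfl | h
    · simp [nseList]
    · have := ih h
      rw [nseList, List.length_cons]
      split_ifs <;> lia

theorem nseList_eq_zero_iff {w : List α} : nseList w = 0 ↔ w.Pairwise (· ≤ ·) := by
  induction w with
  | nil => simp [nseList]
  | cons a w ih => simp [nseList, ih]

end Lists

section SetsOfLists

variable {α : Type*} [DecidableEq α]

/-- The sets of lists with underlying set `s`. Requiring the lists to add up to `s` as multisets
says at once that they have no repeated entries, are pairwise disjoint and cover `s`. -/
def setsOfLists (s : Finset α) : Finset (Finset (List α)) :=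
  {P ∈ (s.val.powerset.bind Multiset.lists).toFinset.powerset |
    [] ∉ P ∧ ∑ w ∈ P, (w : Multiset α) = s.val}

variable {s : Finset α} {P Q : Finset (List α)} {w : List α} {m : α} {i : ℕ}

theorem mem_setsOfLists :
    P ∈ setsOfLists s ↔ [] ∉ P ∧ ∑ w ∈ P, (w : Multiset α) = s.val := by
  simp only [setsOfLists, mem_filter, mem_powerset, and_iff_right_iff_imp, and_imp]
  intro _ hsum w hw
  simpa using hsum ▸ single_le_sum_of_canonicallyOrdered (f := fun w : List α ↦ (w : Multiset α)) hw

theorem mem_iff_of_mem_setsOfLists (hP : P ∈ setsOfLists s) {x : α} :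
    x ∈ s ↔ ∃ w ∈ P, x ∈ w := by
  rw [← mem_val, ← (mem_setsOfLists.1 hP).2, Multiset.mem_sum]
  simp

theorem eq_empty_iff_of_mem_setsOfLists (hP : P ∈ setsOfLists s) : P = ∅ ↔ s = ∅ := by
  obtain ⟨hnil, hsum⟩ := mem_setsOfLists.1 hP
  rw [← val_eq_zero (s := s), ← hsum, sum_eq_zero_iff, eq_empty_iff_forall_notMem]
  exact forall₂_congr fun w hw ↦ by simp [ne_of_mem_of_not_mem hw hnil]

theorem setsOfLists_empty : setsOfLists (∅ : Finset α) = {∅} := by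
  refine eq_singleton_iff_unique_mem.2 ⟨mem_setsOfLists.2 (by simp), fun P hP ↦ ?_⟩
  exact (eq_empty_iff_of_mem_setsOfLists hP).2 rfl

theorem sum_length_of_mem_setsOfLists (hP : P ∈ setsOfLists s) : ∑ w ∈ P, w.length = #s := by
  simpa using congrArg Multiset.card (mem_setsOfLists.1 hP).2

/-- The set of lists obtained from `Q` by inserting `m` at position `i` of its list `w`;
for `w = []` a new list `[m]` is added. -/
def insertInto (m : α) (Q : Finset (List α)) (w : List α) (i : ℕ) : Finset (List α) :=
  insert (w.insertIdx i m) (Q.erase w)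

theorem notMem_of_mem_insert_nil (hm : m ∉ s) (hQ : Q ∈ setsOfLists s)
    (hw : w ∈ insert [] Q) : m ∉ w := by
  rcases mem_insert.1 hw with rfl | hw
  · exact List.not_mem_nil
  · exact fun h ↦ hm ((mem_iff_of_mem_setsOfLists hQ).2 ⟨w, hw, h⟩)

theorem insertIdx_notMem_erase (hm : m ∉ s) (hQ : Q ∈ setsOfLists s) (hi : i ≤ w.length)
    (v : List α) : w.insertIdx i m ∉ Q.erase v := fun h ↦
  notMem_of_mem_insert_nil hm hQ (mem_insert_of_mem (mem_of_mem_erase h))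
    ((List.mem_insertIdx hi).2 (Or.inl rfl))

theorem sum_erase_add_of_mem_insert_nil {M : Type*} [AddCommMonoid M] {f : List α → M}
    (hf : f [] = 0) (hQ : [] ∉ Q) (hw : w ∈ insert [] Q) :
    ∑ v ∈ Q.erase w, f v + f w = ∑ v ∈ Q, f v := by
  rcases mem_insert.1 hw with rfl | hw
  · rw [erase_eq_of_notMem hQ, hf, add_zero]
  · exact sum_erase_add _ _ hw

theorem insertInto_mem_setsOfLists (hm : m ∉ s) (hQ : Q ∈ setsOfLists s)
    (hw : w ∈ insert [] Q) (hi : i ≤ w.length) :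
    insertInto m Q w i ∈ setsOfLists (insert m s) := by
  obtain ⟨hnil, hsum⟩ := mem_setsOfLists.1 hQ
  refine mem_setsOfLists.2 ⟨?_, ?_⟩
  · have : w.insertIdx i m ≠ [] := List.ne_nil_of_mem ((List.mem_insertIdx hi).2 (Or.inl rfl))
    simp [insertInto, hnil, this.symm]
  · rw [insertInto, sum_insert (insertIdx_notMem_erase hm hQ hi w), coe_insertIdx hi,
      Multiset.cons_add, add_comm, sum_erase_add_of_mem_insert_nil rfl hnil hw, hsum,
      insert_val_of_notMem hm]

theorem insertInto_inj (hm : m ∉ s) {Q' : Finset (List α)} {w' : List α} {i' : ℕ}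
    (hQ : Q ∈ setsOfLists s) (hw : w ∈ insert [] Q) (hi : i ≤ w.length)
    (hQ' : Q' ∈ setsOfLists s) (hw' : w' ∈ insert [] Q') (hi' : i' ≤ w'.length)
    (h : insertInto m Q w i = insertInto m Q' w' i') : Q = Q' ∧ w = w' ∧ i = i' := by
  have hmem : w.insertIdx i m ∈ insert (w'.insertIdx i' m) (Q'.erase w') :=
    h.subset (mem_insert_self _ _)
  have hidx := (mem_insert.1 hmem).resolve_right (insertIdx_notMem_erase hm hQ' hi w')
  obtain ⟨rfl, rfl⟩ := insertIdx_inj_of_notMem (notMem_of_mem_insert_nil hm hQ hw)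
    (notMem_of_mem_insert_nil hm hQ' hw') hi hi' hidx
  have herase : Q.erase w = Q'.erase w := by
    rw [← erase_insert (insertIdx_notMem_erase hm hQ hi w),
      ← erase_insert (insertIdx_notMem_erase hm hQ' hi w)]
    exact congrArg (erase · _) h
  have := (mem_setsOfLists.1 hQ).1
  have := (mem_setsOfLists.1 hQ').1
  refine ⟨?_, rfl, rfl⟩
  rcases eq_or_ne w [] with rfl | hnil
  · rwa [erase_eq_of_notMem ‹_›, erase_eq_of_notMem ‹_›] at herase
  · rw [← insert_erase (mem_of_mem_insert_of_ne hw hnil), herase,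
      insert_erase (mem_of_mem_insert_of_ne hw' hnil)]

theorem exists_insertInto_eq (hm : m ∉ s) (hP : P ∈ setsOfLists (insert m s)) :
    ∃ Q ∈ setsOfLists s, ∃ w ∈ insert [] Q, ∃ i ≤ w.length, insertInto m Q w i = P := by
  obtain ⟨u, hu, hmu⟩ := (mem_iff_of_mem_setsOfLists hP).1 (mem_insert_self m s)
  obtain ⟨w, i, hi, rfl⟩ := exists_insertIdx_eq_of_mem hmu
  obtain ⟨hnil, hsum⟩ := mem_setsOfLists.1 hP
  obtain ⟨R, hR⟩ : ∃ R, R = P.erase (w.insertIdx i m) := ⟨_, rfl⟩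
  have hnilR : [] ∉ R := fun h ↦ hnil (mem_of_mem_erase (hR ▸ h))
  have hsumR : (w : Multiset α) + ∑ v ∈ R, (v : Multiset α) = s.val := by
    rw [← add_sum_erase _ _ hu, ← hR, coe_insertIdx hi, Multiset.cons_add,
      insert_val_of_notMem hm] at hsum
    exact (Multiset.cons_inj_right m).1 hsum
  rcases eq_or_ne w [] with rfl | hw
  · refine ⟨R, mem_setsOfLists.2 ⟨hnilR, by simpa using hsumR⟩, [], by simp, i, hi, ?_⟩
    rw [insertInto, erase_eq_of_notMem hnilR, hR, insert_erase hu]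
  · have hwR : w ∉ R := fun h ↦ by
      obtain ⟨x, hx⟩ := List.exists_mem_of_ne_nil w hw
      have hdisj := Multiset.disjoint_of_nodup_add (hsumR ▸ s.nodup)
      exact Multiset.disjoint_left.1 hdisj hx (Multiset.mem_sum.2 ⟨w, h, hx⟩)
    refine ⟨insert w R, mem_setsOfLists.2 ⟨by simp [hw.symm, hnilR], ?_⟩, w, by simp, i, hi, ?_⟩
    · rw [sum_insert hwR, hsumR]
    · rw [insertInto, erase_insert hwR, hR, insert_erase hu]

theorem sum_setsOfLists_insert {M : Type*} [AddCommMonoid M] (hm : m ∉ s)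
    (f : Finset (List α) → M) :
    ∑ P ∈ setsOfLists (insert m s), f P =
      ∑ Q ∈ setsOfLists s, ∑ w ∈ insert [] Q, ∑ i ∈ range (w.length + 1),
        f (insertInto m Q w i) := by
  simp only [sum_sigma']
  symm
  refine sum_nbij (fun x ↦ insertInto m x.1 x.2.1 x.2.2) ?_ ?_ ?_ fun _ _ ↦ rfl
  · rintro ⟨Q, w, i⟩ hx
    simp only [mem_sigma, mem_range_succ_iff] at hx
    exact insertInto_mem_setsOfLists hm hx.1 hx.2.1 hx.2.2
  · rintro ⟨Q, w, i⟩ hx ⟨Q', w', i'⟩ hx' h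
    simp only [mem_coe, mem_sigma, mem_range_succ_iff] at hx hx'
    obtain ⟨rfl, rfl, rfl⟩ :=
      insertInto_inj hm hx.1 hx.2.1 hx.2.2 hx'.1 hx'.2.1 hx'.2.2 h
    rfl
  · intro P hP
    obtain ⟨Q, hQ, w, hw, i, hi, rfl⟩ := exists_insertInto_eq hm hP
    exact ⟨⟨Q, w, i⟩, by simp [hQ, mem_insert.1 hw, Nat.lt_succ_of_le hi], rfl⟩

theorem card_insertInto (hm : m ∉ s) (hQ : Q ∈ setsOfLists s) (hi : i ≤ w.length) :
    #(insertInto m Q w i) = #(insert w Q) := by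
  rw [insertInto, card_insert_of_notMem (insertIdx_notMem_erase hm hQ hi w),
    ← erase_insert_eq_erase, card_erase_add_one (mem_insert_self w Q)]

end SetsOfLists

section Nse

variable {α : Type*} [LinearOrder α] {s : Finset α} {P Q : Finset (List α)} {m : α}

/-- The statistic `nse` of a set of lists with entries in an arbitrary linear order. -/
def nseTotal (P : Finset (List α)) : ℕ := ∑ w ∈ P, nseList w

theorem nseTotal_add_card_le (hP : P ∈ setsOfLists s) : nseTotal P + #P ≤ #s := by
  have hnil := (mem_setsOfLists.1 hP).1
  calc nseTotal P + #P = ∑ w ∈ P, (nseList w + 1) := by simp [nseTotal, sum_add_distrib]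
    _ ≤ ∑ w ∈ P, w.length :=
      sum_le_sum fun w hw ↦ nseList_lt_length (ne_of_mem_of_not_mem hw hnil)
    _ = #s := sum_length_of_mem_setsOfLists hP

theorem nseTotal_insertInto (hm : ∀ x ∈ s, x < m) (hQ : Q ∈ setsOfLists s) {w : List α}
    (hw : w ∈ insert [] Q) {i : ℕ} (hi : i ≤ w.length) :
    nseTotal (insertInto m Q w i) = nseTotal Q + if i < w.length then 1 else 0 := by
  have hlt : ∀ x ∈ w, x < m := fun x hx ↦ by
    have hwQ := mem_of_mem_insert_of_ne hw (List.ne_nil_of_mem hx)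
    exact hm x ((mem_iff_of_mem_setsOfLists hQ).2 ⟨w, hwQ, hx⟩)
  have hms : m ∉ s := fun h ↦ (hm m h).false
  rw [nseTotal, insertInto, sum_insert (insertIdx_notMem_erase hms hQ hi w),
    nseList_insertIdx_of_forall_lt hlt hi, add_right_comm, add_comm (nseList w),
    sum_erase_add_of_mem_insert_nil rfl (mem_setsOfLists.1 hQ).1 hw, nseTotal]

theorem sum_setsOfLists_insert_max {M : Type*} [AddCommMonoid M] (hm : ∀ x ∈ s, x < m)
    (g : ℕ → ℕ → M) :
    ∑ P ∈ setsOfLists (insert m s), g #P (nseTotal P) =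
      ∑ Q ∈ setsOfLists s, (g (#Q + 1) (nseTotal Q) + #Q • g #Q (nseTotal Q) +
        #s • g #Q (nseTotal Q + 1)) := by
  have hms : m ∉ s := fun h ↦ (hm m h).false
  rw [sum_setsOfLists_insert hms]
  refine sum_congr rfl fun Q hQ ↦ ?_
  have hnil := (mem_setsOfLists.1 hQ).1
  have hpositions : ∀ w ∈ insert [] Q, ∑ i ∈ range (w.length + 1),
      g #(insertInto m Q w i) (nseTotal (insertInto m Q w i)) =
        w.length • g #(insert w Q) (nseTotal Q + 1) + g #(insert w Q) (nseTotal Q) := by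
    intro w hw
    rw [sum_range_succ, card_insertInto hms hQ le_rfl, nseTotal_insertInto hm hQ hw le_rfl,
      if_neg (lt_irrefl _), add_zero, sum_congr rfl, sum_const, card_range]
    intro i hi
    have hi := mem_range.1 hi
    rw [card_insertInto hms hQ hi.le, nseTotal_insertInto hm hQ hw hi.le, if_pos hi]
  have hlists : ∑ w ∈ Q, (w.length • g #(insert w Q) (nseTotal Q + 1) +
      g #(insert w Q) (nseTotal Q)) =
        #s • g #Q (nseTotal Q + 1) + #Q • g #Q (nseTotal Q) := by
    rw [← sum_length_of_mem_setsOfLists hQ, sum_smul, ← sum_const, ← sum_add_distrib]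
    exact sum_congr rfl fun w hw ↦ by rw [insert_eq_of_mem hw]
  rw [sum_congr rfl hpositions, sum_insert hnil, hlists, card_insert_of_notMem hnil,
    List.length_nil, zero_smul, zero_add, add_assoc, add_comm (#s • _)]

theorem card_filter_setsOfLists_insert_max (hm : ∀ x ∈ s, x < m) (k l : ℕ) :
    #{P ∈ setsOfLists (insert m s) | #P = k + 1 ∧ nseTotal P + (l + 1) = #(insert m s)} =
      #{P ∈ setsOfLists s | #P = k ∧ nseTotal P + l = #s} +
        (k + 1) * #{P ∈ setsOfLists s | #P = k + 1 ∧ nseTotal P + l = #s} +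
          #s * #{P ∈ setsOfLists s | #P = k + 1 ∧ nseTotal P + (l + 1) = #s} := by
  have hms : m ∉ s := fun h ↦ (hm m h).false
  simp only [card_filter, card_insert_of_notMem hms]
  rw [sum_setsOfLists_insert_max hm fun a b ↦ if a = k + 1 ∧ b + (l + 1) = #s + 1 then 1 else 0,
    mul_sum, mul_sum, ← sum_add_distrib, ← sum_add_distrib]
  refine sum_congr rfl fun Q _ ↦ ?_
  congr 2
  · simp [← add_assoc]
  · by_cases hQ : #Q = k + 1 <;> simp [hQ, ← add_assoc]
  · simp [← add_assoc, add_right_comm]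

theorem card_filter_setsOfLists (s : Finset α) (k l : ℕ) :
    #{P ∈ setsOfLists s | #P = k ∧ nseTotal P + l = #s} =
      Nat.stirlingFirst #s l * Nat.stirlingSecond l k := by
  induction s using Finset.induction_on_max generalizing k l with
  | empty =>
    cases k <;> cases l <;> simp [setsOfLists_empty, filter_singleton, nseTotal]
  | insert m s hm ih =>
    have hcard : #(insert m s) = #s + 1 := card_insert_of_notMem fun h ↦ (hm m h).false
    have hpos : ∀ P ∈ setsOfLists (insert m s), 0 < #P := fun P hP ↦
      card_pos.2 <| nonempty_iff_ne_empty.2 <|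
        (eq_empty_iff_of_mem_setsOfLists hP).not.2 (insert_ne_empty m s)
    rcases k with _ | k
    · rw [filter_false_of_mem fun P hP h ↦ (hpos P hP).ne' h.1]
      cases l <;> simp [hcard]
    rcases l with _ | l
    · rw [filter_false_of_mem fun P hP h ↦ by grind [nseTotal_add_card_le hP]]
      simp [hcard]
    rw [card_filter_setsOfLists_insert_max hm, ih, ih, ih, hcard, Nat.stirlingFirst_succ_succ,
      Nat.stirlingSecond_succ_succ]
    ring

end Nse

section Partitions

theorem nodup_sum_iff {ι α : Type*} {P : Finset ι} {f : ι → Multiset α} :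
    (∑ i ∈ P, f i).Nodup ↔
      (∀ i ∈ P, (f i).Nodup) ∧ (P : Set ι).Pairwise fun i j ↦ Disjoint (f i) (f j) := by
  classical
  induction P using Finset.induction_on with
  | empty => simp
  | insert i P hi ih =>
    rw [sum_insert hi, Multiset.nodup_add, ih, Multiset.disjoint_finsetSum_right, coe_insert,
      Set.pairwise_insert_of_symm_of_notMem (mod_cast hi), forall_mem_insert]
    simp only [mem_coe]
    tauto

theorem sum_eq_val_iff {ι α : Type*} {P : Finset ι} {f : ι → Multiset α} {s : Finset α} :
    ∑ i ∈ P, f i = s.val ↔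
      (∀ i ∈ P, (f i).Nodup) ∧ ((P : Set ι).Pairwise fun i j ↦ Disjoint (f i) (f j)) ∧
        ∀ x, x ∈ s ↔ ∃ i ∈ P, x ∈ f i := by
  rw [← and_assoc, ← nodup_sum_iff]
  simp only [← Multiset.mem_sum]
  constructor
  · intro h
    simp [h, s.nodup]
  · rintro ⟨hnodup, hmem⟩
    exact (Multiset.Nodup.ext hnodup s.nodup).2 fun x ↦ (hmem x).symm

variable {n : ℕ}

theorem isSetOfLists_iff_mem_setsOfLists {P : Finset (List (Fin n))} :
    IsSetOfLists n P ↔ P ∈ setsOfLists univ := by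
  simp [IsSetOfLists, mem_setsOfLists, sum_eq_val_iff, Set.Pairwise, List.disjoint_left]

theorem isPartitionOf_iff_sum_eq_val {B : Finset (Finset (Fin n))} :
    IsPartitionOf n B ↔ ∅ ∉ B ∧ ∑ b ∈ B, b.val = univ.val := by
  have hempty : (∀ b ∈ B, b.Nonempty) ↔ ∅ ∉ B :=
    ⟨fun h hB ↦ not_nonempty_empty (h ∅ hB),
      fun h b hb ↦ nonempty_iff_ne_empty.2 (ne_of_mem_of_not_mem hb h)⟩
  simp [IsPartitionOf, sum_eq_val_iff, hempty, Set.Pairwise, Finset.nodup]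

/-- The embedding listing each finite set in increasing order. It identifies the set partitions
with the sets of lists of vanishing `nse`. -/
@[simps]
def sortEmbedding (α : Type*) [LinearOrder α] : Finset α ↪ List α where
  toFun b := b.sort
  inj' b c h := by simpa using congrArg List.toFinset h

theorem isPartitionOf_iff_map_sortEmbedding {B : Finset (Finset (Fin n))} :
    IsPartitionOf n B ↔ B.map (sortEmbedding (Fin n)) ∈ setsOfLists univ := by
  have hnil : [] ∉ B.map (sortEmbedding (Fin n)) ↔ ∅ ∉ B := by
    rw [← sort_empty (· ≤ ·), ← sortEmbedding_apply, mem_map']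
  rw [isPartitionOf_iff_sum_eq_val, mem_setsOfLists, hnil, sum_map]
  simp

theorem nseTotal_eq_zero_iff {α : Type*} [LinearOrder α] {s : Finset α} {P : Finset (List α)}
    (hP : P ∈ setsOfLists s) :
    nseTotal P = 0 ↔ ∃ B : Finset (Finset α), B.map (sortEmbedding α) = P := by
  have hnodup : ∀ w ∈ P, w.Nodup := fun w hw ↦ by
    simpa using (sum_eq_val_iff.1 (mem_setsOfLists.1 hP).2).1 w hw
  have hsort : ∀ w ∈ P, nseList w = 0 ↔ w ∈ Set.range (sortEmbedding α) := fun w hw ↦ by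
    rw [nseList_eq_zero_iff, ← List.toFinset_sort _ (hnodup w hw)]
    refine ⟨fun h ↦ ⟨w.toFinset, h⟩, ?_⟩
    rintro ⟨b, rfl⟩
    simp
  rw [nseTotal, sum_eq_zero_iff, forall₂_congr hsort]
  have := subset_set_image_iff (s := Set.univ) (t := P) (f := sortEmbedding α)
  simpa [Set.subset_def, map_eq_image] using this

theorem stirlingSecond_eq_nat_stirlingSecond (n k : ℕ) :
    stirlingSecond n k = Nat.stirlingSecond n k := by
  have himage : map (sortEmbedding (Fin n)) '' {B | IsPartitionOf n B ∧ #B = k} =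
      {P ∈ setsOfLists (univ : Finset (Fin n)) |
        #P = k ∧ nseTotal P + n = #(univ : Finset (Fin n))} := by
    ext P
    simp only [coe_filter, card_univ, Fintype.card_fin, Nat.add_eq_right, Set.mem_image,
      Set.mem_ofPred_eq]
    constructor
    · rintro ⟨B, ⟨hB, hcard⟩, rfl⟩
      rw [isPartitionOf_iff_map_sortEmbedding] at hB
      exact ⟨hB, by rwa [card_map], (nseTotal_eq_zero_iff hB).2 ⟨B, rfl⟩⟩
    · rintro ⟨hP, hcard, hnse⟩
      obtain ⟨B, rfl⟩ := (nseTotal_eq_zero_iff hP).1 hnse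
      exact ⟨B, ⟨isPartitionOf_iff_map_sortEmbedding.2 hP, by rwa [card_map] at hcard⟩, rfl⟩
  rw [stirlingSecond, ← Set.ncard_image_of_injective _ (map_injective _), himage,
    Set.ncard_coe_finset, card_filter_setsOfLists, card_fin, Nat.stirlingFirst_self, one_mul]

end Partitions

theorem set_of_lists_nse_count_general {α : Type*} [LinearOrder α] (s : Finset α) (k : ℕ) {j : ℕ}
    (hj : j ≤ #s) :
    #{P ∈ setsOfLists s | #P = k ∧ nseTotal P = j} =
      stirlingFirst #s (#s - j) * stirlingSecond (#s - j) k := by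
  rw [stirlingFirst_eq_nat_stirlingFirst, stirlingSecond_eq_nat_stirlingSecond,
    ← card_filter_setsOfLists]
  congr! 3
  lia

/-- For `1 ≤ k ≤ n` and `0 ≤ j ≤ n-k`, the number of unordered
partitions of `[n]` into `k` nonempty lists with `nse = j` equals
`c(n, n-j) * S(n-j, k)`. -/
theorem set_of_lists_nse_count (n k j : ℕ) (hk : 1 ≤ k) (hkn : k ≤ n) (hj : j ≤ n - k) :
    Set.ncard {P : Finset (List (Fin n)) | IsSetOfLists n P ∧ P.card = k ∧ nseSL P = j} =
      stirlingFirst n (n - j) * stirlingSecond (n - j) k := by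
  have h := set_of_lists_nse_count_general (univ : Finset (Fin n)) k (j := j) (by simp; lia)
  simpa [isSetOfLists_iff_mem_setsOfLists, ← Set.ncard_coe_finset, nseSL, nseTotal] using h
end

section
/- For every integer n ≥ 1, the sum of the statistic nse over all unordered partitions of [n] = {1,…,n} into nonempty lists equals ∑_{j=0}^{n−1} j · c(n, n−j) · B_{n−j}; consequently the average value of nse over all such partitions is (∑_{j=0}^{n−1} j · c(n,n−j) · B_{n−j}) / (∑_{k=0}^{n} c(n,k) · B_k). -/
open Finset

/-! With `x` marking right-to-left minima, the orderings of an `m`-element set have generating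
function `x (x + 1) ⋯ (x + m - 1)`, and so do its permutations with `x` marking cycles. A set of
lists is an equivalence relation `r` together with an ordering of each class, so summing over `r`
the product of these polynomials over the classes counts the pairs of a permutation `σ` and an
equivalence relation `r` whose classes are unions of cycles of `σ`. If `σ` has `k` cycles there are
`B_k` such `r`, so exactly `c(n, k) B_k` sets of lists have `k` right-to-left minima in total. The
remaining `n - k` entries are those counted by `nse`. -/

section Orbits

open Equiv Equiv.Perm Polynomial

variable {α β : Type*}

theorem sameCycle_setoid_le_iff {σ : Perm α} {r : Setoid α} :
    SameCycle.setoid σ ≤ r ↔ ∀ x, r x (σ x) := by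
  refine ⟨fun h x => h ⟨1, rfl⟩, ?_⟩
  rintro h x _ ⟨i, rfl⟩
  induction i with
  | zero => exact r.refl x
  | succ i ih => simpa [add_comm _ (1 : ℤ), zpow_one_add] using r.trans ih (h _)
  | pred i ih =>
    refine r.trans ih (r.symm ?_)
    simpa [← Perm.mul_apply, ← zpow_one_add] using h ((σ ^ (-(i : ℤ) - 1)) x)

/-- The number of cycles of a permutation, fixed points included, encoded as the number of classes
of the relation `SameCycle`. -/
noncomputable def orbitCount (σ : Perm α) : ℕ :=
  Nat.card (Quotient (SameCycle.setoid σ))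

theorem orbitCount_le_card [Finite α] (σ : Perm α) : orbitCount σ ≤ Nat.card α :=
  Nat.card_le_card_of_surjective _ Quotient.mk_surjective

theorem orbitCount_pos [Finite α] [Nonempty α] (σ : Perm α) : 0 < orbitCount σ :=
  Finite.card_pos_iff.2 (Nonempty.map (Quotient.mk _) ‹_›)

theorem orbitCount_eq_card_range {σ : Perm α} {f : α → β}
    (h : SameCycle.setoid σ = Setoid.ker f) : orbitCount σ = Nat.card (Set.range f) := by
  rw [orbitCount, h, Nat.card_congr (Setoid.quotientKerEquivRange f)]

theorem orbitCount_eq_of_sameCycle {σ : Perm α} {τ : Perm β} (f : α → β) (g : β → α)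
    (hf : ∀ x, SameCycle τ (f x) (f (σ x))) (hg : ∀ y, SameCycle σ (g y) (g (τ y)))
    (hgf : ∀ x, SameCycle σ (g (f x)) x) (hfg : ∀ y, SameCycle τ (f (g y)) y) :
    orbitCount σ = orbitCount τ := by
  have hf' : SameCycle.setoid σ ≤ (SameCycle.setoid τ).comap f := sameCycle_setoid_le_iff.2 hf
  have hg' : SameCycle.setoid τ ≤ (SameCycle.setoid σ).comap g := sameCycle_setoid_le_iff.2 hg
  exact Nat.card_congr
    { toFun := Quotient.map f hf'
      invFun := Quotient.map g hg'
      left_inv := Quotient.ind fun x => Quotient.sound (hgf x)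
      right_inv := Quotient.ind fun y => Quotient.sound (hfg y) }

theorem orbitCount_permCongr (e : α ≃ β) (σ : Perm α) :
    orbitCount (e.permCongr σ) = orbitCount σ :=
  (orbitCount_eq_of_sameCycle e e.symm (fun x => ⟨1, by simp⟩) (fun y => ⟨1, by simp⟩)
    (fun x => by simp [SameCycle.refl]) (fun y => by simp [SameCycle.refl])).symm

theorem orbitCount_optionCongr [Finite α] (σ : Perm α) :
    orbitCount σ.optionCongr = orbitCount σ + 1 := by
  have hker : SameCycle.setoid σ.optionCongr =
      Setoid.ker (Option.map (Quotient.mk (SameCycle.setoid σ))) := by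
    refine le_antisymm (sameCycle_setoid_le_iff.2 ?_) ?_
    · rintro (_ | x)
      · rfl
      · exact congrArg some (Quotient.sound ⟨1, rfl⟩)
    · have hsome : SameCycle.setoid σ ≤ (SameCycle.setoid σ.optionCongr).comap some :=
        sameCycle_setoid_le_iff.2 fun x => ⟨1, rfl⟩
      rintro (_ | x) (_ | y) hxy
      · exact SameCycle.refl _ _
      · cases hxy
      · cases hxy
      · exact hsome (Quotient.exact (Option.some_injective _ hxy))
  have hsurj : (Option.map (Quotient.mk (SameCycle.setoid σ))).Surjective := by
    rintro (_ | q)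
    · exact ⟨none, rfl⟩
    · obtain ⟨x, rfl⟩ := q.exists_rep
      exact ⟨some x, rfl⟩
  rw [orbitCount_eq_card_range hker, hsurj.range_eq, Nat.card_univ, Finite.card_option, orbitCount]

theorem orbitCount_swap_mul_optionCongr [DecidableEq α] (σ : Perm α) (x : α) :
    orbitCount (swap none (some x) * σ.optionCongr) = orbitCount σ := by
  set τ := swap none (some x) * σ.optionCongr
  have h_none : τ none = some x := by simp [τ]
  have h_some : ∀ y, τ (some y) = if σ y = x then none else some (σ y) := fun y => by
    simp [τ, swap_apply_def]
  refine (orbitCount_eq_of_sameCycle some (Option.getD · x) (fun y => ?_) ?_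
    (fun y => SameCycle.refl _ _) ?_).symm
  · by_cases hy : σ y = x
    · exact ⟨2, by simp [pow_two, h_some, hy, h_none]⟩
    · exact ⟨1, by simp [h_some, hy]⟩
  · rintro (_ | y)
    · simp [h_none, SameCycle.refl]
    · exact ⟨1, by by_cases hy : σ y = x <;> simp [h_some, hy]⟩
  · rintro (_ | y)
    · exact SameCycle.symm ⟨1, by simp [h_none]⟩
    · exact SameCycle.refl _ _

theorem sum_pow_orbitCount {R : Type*} [CommSemiring R] (x : R) (α : Type*) [Fintype α]
    [DecidableEq α] :
    ∑ σ : Perm α, x ^ orbitCount σ = (ascPochhammer R (Fintype.card α)).eval x := by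
  suffices ∀ (α : Type _) [Fintype α] [DecidableEq α],
      ∑ σ : Perm α, x ^ orbitCount σ = (ascPochhammer R (Fintype.card α)).eval x from this α
  refine Fintype.induction_empty_option (fun α β _ e ih => ?_) ?_ fun α _ ih => ?_
  · intro _
    let _ := Fintype.ofEquiv β e.symm
    classical
    rw [← Fintype.card_congr e, ← Equiv.sum_comp e.permCongr]
    simp only [orbitCount_permCongr]
    convert ih
  · intro _
    simp [orbitCount]
  · intro _
    classical
    have : Fintype.card (Option α) = Fintype.card α + 1 := by simp
    rw [← decomposeOption.symm.sum_comp, Fintype.sum_prod_type_right, this,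
      ascPochhammer_succ_eval, ← ih, sum_mul]
    refine sum_congr rfl fun σ _ => ?_
    simp only [Fintype.sum_option, decomposeOption_symm_apply, swap_self, ← Perm.one_def, one_mul,
      orbitCount_optionCongr, orbitCount_swap_mul_optionCongr, sum_const, card_univ, nsmul_eq_mul]
    ring

theorem orbitCount_eq_sum_subtypePerm {ι : Type*} [Finite α] [Fintype ι] (f : α → ι) (σ : Perm α)
    (hσ : ∀ x, f (σ x) = f x) :
    orbitCount σ = ∑ i, orbitCount (σ.subtypePerm (p := (f · = i)) fun x => by rw [hσ x]) := by
  have hf : SameCycle.setoid σ ≤ Setoid.ker f := sameCycle_setoid_le_iff.2 fun x => (hσ x).symm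
  rw [orbitCount, ← Nat.card_congr (Equiv.sigmaFiberEquiv (Quotient.lift f hf)), Nat.card_sigma]
  refine sum_congr rfl fun i _ => Nat.card_congr ?_
  exact subtypeQuotientEquivQuotientSubtype _ _ (fun _ => Iff.rfl) fun _ _ => sameCycle_subtypePerm

/-- Permutations preserving the fibers of `f` correspond to families of permutations of the
fibers. -/
def fiberPermEquiv {ι : Type*} (f : α → ι) :
    {σ : Perm α // ∀ x, f (σ x) = f x} ≃ ∀ i, Perm {x // f x = i} where
  toFun σ i := σ.1.subtypePerm fun x => by rw [σ.2 x]
  invFun F :=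
    ⟨(sigmaFiberEquiv f).permCongr (Perm.sigmaCongrRight F), fun x => (F (f x) ⟨x, rfl⟩).2⟩
  left_inv σ := rfl
  right_inv F := by
    funext i
    ext ⟨x, rfl⟩
    rfl

theorem sum_pow_orbitCount_of_map_eq {ι R : Type*} [CommSemiring R] [Fintype α] [DecidableEq α]
    [Fintype ι] [DecidableEq ι] (f : α → ι) (x : R) :
    ∑ σ : Perm α with ∀ y, f (σ y) = f y, x ^ orbitCount σ =
      ∏ i, (ascPochhammer R #{y | f y = i}).eval x := by
  simp only [← Fintype.card_subtype, ← sum_pow_orbitCount, Fintype.prod_sum]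
  rw [← Finset.sum_subtype_eq_sum_filter, Finset.subtype_univ]
  refine Fintype.sum_equiv (fiberPermEquiv f) _ _ fun σ => ?_
  rw [orbitCount_eq_sum_subtypePerm f σ.1 σ.2, prod_pow_eq_pow_sum]
  rfl

/-- The cycle of `σ` through `x`, as a cycle factor of `σ` if `σ x ≠ x` and as the point `x`
otherwise, since `cycleOf` is the identity at every fixed point. -/
def cycleOrFixed [Fintype α] [DecidableEq α] (σ : Perm α) (x : α) : Perm α ⊕ α :=
  if σ x = x then .inr x else .inl (σ.cycleOf x)

theorem sameCycle_setoid_eq_ker_cycleOrFixed [Fintype α] [DecidableEq α] (σ : Perm α) :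
    SameCycle.setoid σ = Setoid.ker (cycleOrFixed σ) := by
  refine le_antisymm (sameCycle_setoid_le_iff.2 fun x => ?_) fun x y hxy => ?_
  · change cycleOrFixed σ x = cycleOrFixed σ (σ x)
    by_cases hx : σ x = x <;> simp [cycleOrFixed, hx]
  · change cycleOrFixed σ x = cycleOrFixed σ y at hxy
    simp only [cycleOrFixed] at hxy
    split_ifs at hxy with hx hy hy
    · exact Sum.inr_injective hxy ▸ SameCycle.refl _ _
    · exact (sameCycle_iff_cycleOf_eq_of_mem_support (by simpa) (by simpa)).2
        (Sum.inl_injective hxy)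

theorem range_cycleOrFixed [Fintype α] [DecidableEq α] (σ : Perm α) :
    Set.range (cycleOrFixed σ) = σ.cycleFactorsFinset.disjSum ({x | σ x = x} : Finset α) := by
  ext (c | x)
  · simp only [Set.mem_range, mem_coe, inl_mem_disjSum]
    refine ⟨?_, fun hc => ?_⟩
    · rintro ⟨x, hx⟩
      simp only [cycleOrFixed] at hx
      split_ifs at hx with h
      obtain rfl := Sum.inl_injective hx
      exact cycleOf_mem_cycleFactorsFinset_iff.2 (mem_support.2 h)
    · obtain ⟨x, hx⟩ := (mem_cycleFactorsFinset_iff.1 hc).1.nonempty_support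
      have hσx := mem_support.1 (mem_cycleFactorsFinset_support_le hc hx)
      exact ⟨x, by simp [cycleOrFixed, hσx, cycle_is_cycleOf hx hc]⟩
  · simp only [Set.mem_range, mem_coe, inr_mem_disjSum, mem_filter_univ]
    refine ⟨?_, fun hx => ⟨x, if_pos hx⟩⟩
    rintro ⟨y, hy⟩
    simp only [cycleOrFixed] at hy
    split_ifs at hy with h
    exact Sum.inr_injective hy ▸ h

theorem orbitCount_eq_card_cycleFactorsFinset_add_card_fixed [Fintype α] [DecidableEq α]
    (σ : Perm α) : orbitCount σ = #σ.cycleFactorsFinset + #{x | σ x = x} := by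
  rw [orbitCount_eq_card_range (sameCycle_setoid_eq_ker_cycleOrFixed σ), range_cycleOrFixed,
    Nat.card_coe_set_eq, Set.ncard_coe_finset, card_disjSum]

theorem cycleCount_eq_orbitCount {n : ℕ} (σ : Perm (Fin n)) : cycleCount σ = orbitCount σ := by
  rw [cycleCount, cycleType_def, Multiset.card_map,
    orbitCount_eq_card_cycleFactorsFinset_add_card_fixed]
  rfl

end Orbits

section Setoids

variable {α : Type*}

instance [Finite α] : Finite (Setoid α) :=
  Finite.of_injective Setoid.classes fun _ _ => Setoid.classes_inj.2

theorem isPartitionOf_iff_isPartition {n : ℕ} (P : Finset (Finset (Fin n))) :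
    IsPartitionOf n P ↔
      Setoid.IsPartition ((↑) '' (P : Set (Finset (Fin n))) : Set (Set (Fin n))) := by
  have h_empty :
      ∅ ∉ ((↑) '' (P : Set (Finset (Fin n))) : Set (Set (Fin n))) ↔ ∀ b ∈ P, b.Nonempty := by
    simp [nonempty_iff_ne_empty]
  simp only [IsPartitionOf, Setoid.IsPartition, h_empty]
  refine and_congr_right fun _ => ⟨fun ⟨h_disj, h_cover⟩ x => ?_, fun h => ⟨?_, fun x => ?_⟩⟩
  · obtain ⟨b, hb, hx⟩ := h_cover x
    refine ⟨b, ⟨⟨b, hb, rfl⟩, hx⟩, ?_⟩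
    rintro _ ⟨⟨c, hc, rfl⟩, hxc⟩
    by_contra hne
    exact disjoint_left.1 (h_disj c hc b hb (mt (congrArg _) hne)) hxc hx
  · refine fun b hb c hc hne => disjoint_left.2 fun x hxb hxc => hne ?_
    exact coe_injective ((h x).unique ⟨⟨b, hb, rfl⟩, hxb⟩ ⟨⟨c, hc, rfl⟩, hxc⟩)
  · obtain ⟨_, ⟨⟨b, hb, rfl⟩, hx⟩, -⟩ := h x
    exact ⟨b, hb, hx⟩

theorem bell_eq_card_setoid (n : ℕ) : bell n = Nat.card (Setoid (Fin n)) := by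
  rw [bell, ← Nat.card_coe_set_eq, Nat.card_congr (Setoid.Partition.orderIso (Fin n)).toEquiv]
  let e := Fintype.finsetEquivSet.finsetCongr.trans (Fintype.finsetEquivSet (α := Set (Fin n)))
  refine Nat.card_congr (e.subtypeEquiv fun P => ?_)
  rw [Set.mem_ofPred_eq, isPartitionOf_iff_isPartition]
  congr!
  simp [e]

theorem card_setoid [Finite α] : Nat.card (Setoid α) = bell (Nat.card α) := by
  rw [bell_eq_card_setoid]
  let e := Finite.equivFin α
  exact Nat.card_congr
    { toFun := Setoid.comap e.symm
      invFun := Setoid.comap e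
      left_inv := fun r => by ext; simp [Setoid.comap_rel]
      right_inv := fun r => by ext; simp [Setoid.comap_rel] }

theorem card_setoid_ge [Finite α] (s : Setoid α) :
    Nat.card {r // s ≤ r} = bell (Nat.card (Quotient s)) := by
  rw [← card_setoid]
  exact Nat.card_congr (Setoid.correspondence s).toEquiv

end Setoids

section Orderings

open Polynomial

variable {α : Type*}

/-- The number of right-to-left minima of a list: the positions whose entry is at most every
later entry. -/
def rlMinCount [LinearOrder α] : List α → ℕ
  | [] => 0
  | a :: w => (if ∀ b ∈ w, a ≤ b then 1 else 0) + rlMinCount w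

theorem rlMinCount_add_nseList [LinearOrder α] (w : List α) :
    rlMinCount w + nseList w = w.length := by
  induction w with
  | nil => rfl
  | cons a w ih =>
    have h : (∃ b ∈ w, b < a) ↔ ¬ ∀ b ∈ w, a ≤ b := by simp
    simp only [rlMinCount, nseList, h, List.length_cons, ← ih]
    split_ifs <;> omega

/-- The finite set of all lists enumerating `s` without repetition. -/
def orderings (s : Finset α) : Finset (List α) :=
  ⟨s.val.lists, Multiset.lists_nodup_finset s⟩

theorem mem_orderings {s : Finset α} {l : List α} :
    l ∈ orderings s ↔ l.Nodup ∧ ∀ x, x ∈ l ↔ x ∈ s := by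
  rw [orderings, mem_mk, Multiset.mem_lists_iff]
  refine ⟨fun h => ?_, fun ⟨hl, h⟩ => ?_⟩
  · exact ⟨Multiset.coe_nodup.1 (h.subst s.nodup), fun x => by rw [← mem_val, h]; rfl⟩
  · exact (Multiset.Nodup.ext s.nodup (Multiset.coe_nodup.2 hl)).2 fun x => (h x).symm

theorem orderings_empty : orderings (∅ : Finset α) = {[]} := by
  ext (_ | ⟨a, w⟩)
  · simp [mem_orderings]
  · simpa [mem_orderings] using fun _ _ => ⟨a, fun h => (h rfl).elim⟩

theorem length_of_mem_orderings {s : Finset α} {l : List α} (hl : l ∈ orderings s) :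
    l.length = #s := by
  rw [orderings, mem_mk, Multiset.mem_lists_iff] at hl
  simp [card_def, hl]

theorem cons_mem_orderings [DecidableEq α] {s : Finset α} {a : α} {w : List α} :
    a :: w ∈ orderings s ↔ a ∈ s ∧ w ∈ orderings (s.erase a) := by
  simp only [mem_orderings, List.nodup_cons, List.mem_cons, mem_erase]
  grind

theorem sum_orderings_eq_sum_cons [DecidableEq α] {M : Type*} [AddCommMonoid M] {s : Finset α}
    (hs : s.Nonempty) (f : List α → M) :
    ∑ l ∈ orderings s, f l = ∑ a ∈ s, ∑ w ∈ orderings (s.erase a), f (a :: w) := by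
  rw [sum_sigma']
  symm
  refine sum_bij (fun p _ => p.1 :: p.2) (fun p hp => ?_) ?_ ?_ (fun _ _ => rfl)
  · exact cons_mem_orderings.2 (mem_sigma.1 hp)
  · rintro ⟨a, w⟩ _ ⟨b, u⟩ _ h
    cases h
    rfl
  · rintro (_ | ⟨a, w⟩) hl
    · obtain ⟨x, hx⟩ := hs
      simpa using ((mem_orderings.1 hl).2 x).2 hx
    · exact ⟨⟨a, w⟩, mem_sigma.2 (cons_mem_orderings.1 hl), rfl⟩

theorem sum_pow_rlMinCount {R : Type*} [CommSemiring R] [LinearOrder α] (x : R) (s : Finset α) :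
    ∑ l ∈ orderings s, x ^ rlMinCount l = (ascPochhammer R #s).eval x := by
  induction h : #s generalizing s with
  | zero =>
    obtain rfl := card_eq_zero.1 h
    simp [orderings_empty, rlMinCount]
  | succ n ih =>
    have hs : s.Nonempty := card_pos.1 (by omega)
    have h_cons : ∀ a ∈ s, ∑ w ∈ orderings (s.erase a), x ^ rlMinCount (a :: w) =
        (if a = s.min' hs then x else 1) * (ascPochhammer R n).eval x := by
      intro a ha
      rw [← ih (s.erase a) (by simp [card_erase_of_mem ha, h]), mul_sum]
      refine sum_congr rfl fun w hw => ?_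
      have h_min : (∀ b ∈ w, a ≤ b) ↔ a = s.min' hs := by
        rw [eq_comm, min'_eq_iff]
        simp only [mem_orderings, mem_erase] at hw
        grind
      rw [rlMinCount, pow_add]
      simp only [h_min]
      split_ifs <;> simp
    rw [sum_orderings_eq_sum_cons hs, sum_congr rfl h_cons, ← sum_mul, ascPochhammer_succ_eval,
      mul_comm]
    congr 1
    rw [← add_sum_erase _ _ (s.min'_mem hs), if_pos rfl,
      sum_congr rfl fun a ha => if_neg (ne_of_mem_erase ha)]
    simp [card_erase_of_mem (s.min'_mem hs), h]

end Orderings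

section SetsOfLists

variable {α : Type*} [Fintype α]

open Classical in
/-- The families choosing, for each class of `r`, a list enumerating that class. -/
noncomputable def classOrderings (r : Setoid α) : Finset (Quotient r → List α) :=
  Fintype.piFinset fun q => orderings {x | Quotient.mk r x = q}

theorem mem_classOrderings {r : Setoid α} {L : Quotient r → List α} :
    L ∈ classOrderings r ↔ ∀ q, (L q).Nodup ∧ ∀ x, x ∈ L q ↔ Quotient.mk r x = q := by
  simp [classOrderings, mem_orderings]

open Classical in
theorem injOn_image_classOrderings [DecidableEq α] :
    Set.InjOn (fun p : Σ r : Setoid α, Quotient r → List α => univ.image p.2)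
      {p | p.2 ∈ classOrderings p.1} := by
  rintro ⟨r, L⟩ hL ⟨s, M⟩ hM h
  replace hL q x : x ∈ L q ↔ Quotient.mk r x = q := ((mem_classOrderings.1 hL) q).2 x
  replace hM q x : x ∈ M q ↔ Quotient.mk s x = q := ((mem_classOrderings.1 hM) q).2 x
  have h_mem w : (∃ q, L q = w) ↔ ∃ q, M q = w := by simpa using Finset.ext_iff.1 h w
  have h_L x y : r x y ↔ ∃ w, (∃ q, L q = w) ∧ x ∈ w ∧ y ∈ w := by
    simp [hL, ← Quotient.eq, eq_comm]
  have h_M x y : s x y ↔ ∃ w, (∃ q, M q = w) ∧ x ∈ w ∧ y ∈ w := by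
    simp [hM, ← Quotient.eq, eq_comm]
  obtain rfl : r = s := Setoid.ext fun x y => by simp only [h_L, h_M, h_mem]
  refine congrArg (Sigma.mk r) (funext (Quotient.ind fun x => ?_))
  obtain ⟨q, hq⟩ := (h_mem _).1 ⟨⟦x⟧, rfl⟩
  have hxq : ⟦x⟧ = q := by rw [← hM, hq, hL]
  rw [← hq, hxq]

open Classical in
theorem isSetOfLists_image {n : ℕ} {r : Setoid (Fin n)} {L : Quotient r → List (Fin n)}
    (hL : L ∈ classOrderings r) : IsSetOfLists n (univ.image L) := by
  have h_nodup q := (mem_classOrderings.1 hL q).1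
  have h_mem q := (mem_classOrderings.1 hL q).2
  refine ⟨?_, by simpa, ?_, fun x => ⟨L ⟦x⟧, by simp, (h_mem _ _).2 rfl⟩⟩
  · suffices ∀ q, L q ≠ [] by simpa
    exact Quotient.ind fun x => List.ne_nil_of_mem ((h_mem _ x).2 rfl)
  · suffices ∀ q q', L q ≠ L q' → ∀ x ∈ L q, x ∉ L q' by simpa
    intro q q' hne x hx hx'
    exact hne (congrArg L (((h_mem _ _).1 hx).symm.trans ((h_mem _ _).1 hx')))

open Classical in
theorem IsSetOfLists.exists_image_eq {n : ℕ} {P : Finset (List (Fin n))} (hP : IsSetOfLists n P) :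
    ∃ r : Setoid (Fin n), ∃ L ∈ classOrderings r, univ.image L = P := by
  obtain ⟨h_ne, h_nodup, h_disj, h_cover⟩ := hP
  choose f hfP hf using h_cover
  have h_eq : ∀ w ∈ P, ∀ x ∈ w, f x = w := fun w hw x hx => by
    by_contra hne
    exact h_disj _ (hfP x) w hw hne x (hf x) hx
  refine ⟨Setoid.ker f, Quotient.lift f fun _ _ => id, ?_, ?_⟩
  · refine mem_classOrderings.2 (Quotient.ind fun x => ⟨h_nodup _ (hfP x), fun y => ?_⟩)
    rw [Quotient.eq]
    exact ⟨h_eq _ (hfP x) y, fun h : f y = f x => h.subst (motive := (y ∈ ·)) (hf y)⟩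
  · ext w
    simp only [mem_image, mem_univ, true_and]
    constructor
    · rintro ⟨⟨x⟩, rfl⟩
      exact hfP x
    · intro hw
      obtain ⟨x, hx⟩ := List.exists_mem_of_ne_nil w (h_ne w hw)
      exact ⟨⟦x⟧, h_eq w hw x hx⟩

open Classical in
theorem finsum_isSetOfLists_eq_sum {M : Type*} [AddCommMonoid M] (n : ℕ)
    [Fintype (Setoid (Fin n))] (g : Finset (List (Fin n)) → M) :
    ∑ᶠ P ∈ {P | IsSetOfLists n P}, g P =
      ∑ r : Setoid (Fin n), ∑ L ∈ classOrderings r, g (univ.image L) := by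
  have h_bij : Set.BijOn (fun p : Σ r : Setoid (Fin n), Quotient r → List (Fin n) => univ.image p.2)
      ↑(univ.sigma (classOrderings (α := Fin n))) {P | IsSetOfLists n P} := by
    refine ⟨fun p hp => isSetOfLists_image (by simpa using hp), ?_, fun P hP => ?_⟩
    · simpa [Set.InjOn] using injOn_image_classOrderings (α := Fin n)
    · obtain ⟨r, L, hL, rfl⟩ := IsSetOfLists.exists_image_eq hP
      exact ⟨⟨r, L⟩, by simpa using hL, rfl⟩
  rw [sum_sigma', ← finsum_mem_coe_finset]
  exact (finsum_mem_eq_of_bijOn _ h_bij fun _ _ => rfl).symm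

theorem injective_of_mem_classOrderings {r : Setoid α} {L : Quotient r → List α}
    (hL : L ∈ classOrderings r) : L.Injective := by
  refine Quotient.ind fun x q h => ?_
  rw [← (mem_classOrderings.1 hL q).2, ← h, (mem_classOrderings.1 hL _).2]

open Classical in
theorem nseSL_image_add_sum_rlMinCount {n : ℕ} {r : Setoid (Fin n)} {L : Quotient r → List (Fin n)}
    (hL : L ∈ classOrderings r) : nseSL (univ.image L) + ∑ q, rlMinCount (L q) = n := by
  have h_length q : (L q).length = #{x | Quotient.mk r x = q} :=
    length_of_mem_orderings (Fintype.mem_piFinset.1 hL q)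
  rw [nseSL, sum_image (injective_of_mem_classOrderings hL).injOn, ← sum_add_distrib]
  simp only [add_comm (nseList _), rlMinCount_add_nseList, h_length]
  rw [← card_eq_sum_card_fiberwise (t := univ) (by simp), card_univ, Fintype.card_fin]

end SetsOfLists

section Distribution

open Equiv Equiv.Perm Polynomial

open Classical in
theorem sum_classOrderings_pow_rlMinCount {R α : Type*} [CommSemiring R] [Fintype α]
    [LinearOrder α] (x : R) (r : Setoid α) :
    ∑ L ∈ classOrderings r, x ^ ∑ q, rlMinCount (L q) =
      ∑ σ : Perm α with SameCycle.setoid σ ≤ r, x ^ orbitCount σ := by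
  have h_le (σ : Perm α) : SameCycle.setoid σ ≤ r ↔ ∀ y, Quotient.mk r (σ y) = Quotient.mk r y := by
    rw [sameCycle_setoid_le_iff]
    exact forall_congr' fun y => by rw [Quotient.eq, Setoid.comm']
  simp only [h_le, classOrderings, ← prod_pow_eq_pow_sum]
  rw [sum_pow_orbitCount_of_map_eq,
    ← prod_univ_sum (fun q => orderings {y | Quotient.mk r y = q}) fun _ l => x ^ rlMinCount l]
  exact prod_congr rfl fun q _ => sum_pow_rlMinCount x _

open Classical in
theorem sum_setoid_sum_pow_rlMinCount {R α : Type*} [CommSemiring R] [Fintype α] [LinearOrder α]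
    [Fintype (Setoid α)] (x : R) :
    ∑ r : Setoid α, ∑ L ∈ classOrderings r, x ^ ∑ q, rlMinCount (L q) =
      ∑ σ : Perm α, bell (orbitCount σ) • x ^ orbitCount σ := by
  simp only [sum_classOrderings_pow_rlMinCount, sum_filter]
  rw [sum_comm]
  refine sum_congr rfl fun σ _ => ?_
  rw [← sum_filter, sum_const, orbitCount, ← card_setoid_ge, Nat.subtype_card]
  simp

open Classical in
theorem sum_setoid_sum_comp_rlMinCount {M α : Type*} [AddCommMonoid M] [Fintype α] [LinearOrder α]
    [Fintype (Setoid α)] (F : ℕ → M) :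
    ∑ r : Setoid α, ∑ L ∈ classOrderings r, F (∑ q, rlMinCount (L q)) =
      ∑ σ : Perm α, bell (orbitCount σ) • F (orbitCount σ) := by
  let φ : ℕ[X] →ₗ[ℕ] M := lsum fun k => LinearMap.toSpanSingleton ℕ M (F k)
  have hφ k : φ (X ^ k) = F k := by simp [φ, ← monomial_one_right_eq_X_pow, sum_monomial_index]
  simpa only [map_sum, map_nsmul, hφ] using
    congrArg φ (sum_setoid_sum_pow_rlMinCount (α := α) (X : ℕ[X]))

theorem sum_comp_cycleCount {M : Type*} [AddCommMonoid M] (n : ℕ) (F : ℕ → M) :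
    ∑ σ : Perm (Fin n), F (cycleCount σ) = ∑ k ∈ range (n + 1), stirlingFirst n k • F k := by
  have h_le (σ : Perm (Fin n)) : cycleCount σ ∈ range (n + 1) := by
    simpa [cycleCount_eq_orbitCount, Nat.lt_succ_iff] using orbitCount_le_card σ
  rw [← sum_fiberwise_of_maps_to fun σ _ => h_le σ]
  refine sum_congr rfl fun k _ => ?_
  rw [sum_congr rfl fun σ hσ => by rw [(mem_filter.1 hσ).2], sum_const, stirlingFirst,
    Set.ncard_eq_toFinset_card']
  simp

theorem stirlingFirst_zero_right {n : ℕ} (hn : 1 ≤ n) : stirlingFirst n 0 = 0 := by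
  have : NeZero n := ⟨by omega⟩
  simp [stirlingFirst, cycleCount_eq_orbitCount, (orbitCount_pos _).ne']

theorem finsum_comp_nseSL {M : Type*} [AddCommMonoid M] (n : ℕ) (F : ℕ → M) :
    ∑ᶠ P ∈ {P : Finset (List (Fin n)) | IsSetOfLists n P}, F (nseSL P) =
      ∑ k ∈ range (n + 1), stirlingFirst n k • bell k • F (n - k) := by
  classical
  have := Fintype.ofFinite (Setoid (Fin n))
  rw [finsum_isSetOfLists_eq_sum, ← sum_comp_cycleCount n fun k => bell k • F (n - k)]
  simp only [cycleCount_eq_orbitCount]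
  rw [← sum_setoid_sum_comp_rlMinCount fun k => F (n - k)]
  refine sum_congr rfl fun r _ => sum_congr rfl fun L hL => congrArg F ?_
  exact Nat.eq_sub_of_add_eq (nseSL_image_add_sum_rlMinCount hL)

end Distribution

/-- For `n ≥ 1`, the sum of the statistic `nse` over all unordered
partitions of `[n]` into nonempty lists equals `∑_{j=0}^{n-1} j c(n,n-j) B_{n-j}`;
consequently the average value of `nse` over all such partitions is
`(∑_{j=0}^{n-1} j c(n,n-j) B_{n-j}) / (∑_{k=0}^{n} c(n,k) B_k)`. -/
theorem average_nse_set_of_lists (n : ℕ) (hn : 1 ≤ n) :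
    (∑ᶠ P ∈ {P : Finset (List (Fin n)) | IsSetOfLists n P}, nseSL P) =
        ∑ j ∈ Finset.range n, j * stirlingFirst n (n - j) * bell (n - j) ∧
      ((∑ᶠ P ∈ {P : Finset (List (Fin n)) | IsSetOfLists n P}, nseSL P : ℕ) : ℚ) /
          (Set.ncard {P : Finset (List (Fin n)) | IsSetOfLists n P} : ℚ) =
        ((∑ j ∈ Finset.range n, j * stirlingFirst n (n - j) * bell (n - j) : ℕ) : ℚ) /
          ((∑ k ∈ Finset.range (n + 1), stirlingFirst n k * bell k : ℕ) : ℚ) := by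
  have h_sum : (∑ᶠ P ∈ {P : Finset (List (Fin n)) | IsSetOfLists n P}, nseSL P) =
      ∑ j ∈ Finset.range n, j * stirlingFirst n (n - j) * bell (n - j) := by
    rw [finsum_comp_nseSL n fun t => t, ← sum_range_reflect, sum_range_succ]
    simp only [Nat.add_sub_cancel, Nat.sub_self, stirlingFirst_zero_right hn, zero_smul, add_zero]
    refine sum_congr rfl fun j hj => ?_
    rw [Nat.sub_sub_self (mem_range.1 hj).le, smul_eq_mul, smul_eq_mul]
    ring
  have h_card : Set.ncard {P : Finset (List (Fin n)) | IsSetOfLists n P} =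
      ∑ k ∈ Finset.range (n + 1), stirlingFirst n k * bell k := by
    rw [← finsum_one, finsum_comp_nseSL n fun _ => 1]
    simp
  exact ⟨h_sum, by rw [h_sum, h_card]⟩
end
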